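/- arXiv:2301.06086 — 2 statements merged into one kernel-verified Lean document; each statement's English description precedes it below -/
import Mathlib

section
/- Let n and m be positive integers and u : ℕ × ℕ → ℝ any function defined for k + t ≤ m. Define F(n, l) = u(m - l, l) for all l ∈ {0,…,m}, and for i from n-1 down to 1 define F(i, l) = max over k ∈ {0,…,m-l} of min( u(k, l), F(i+1, l + k) ). Then F(1, 0) equals the maximum, over all vectors (k_1,…,k_n) of nonnegative integers with k_1 + … + k_n = m, of the minimum over i ∈ {1,…,n} of u(k_i, k_1 + … + k_{i-1}). -/
/-!
An optimal sequence for the agents `i, …, n` consists of a pick `k` by agent `i` followed by an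
optimal sequence for the agents `i + 1, …, n`: the welfare of the whole sequence is the infimum of
the utility of `i` and the welfare of the rest, it is monotone in the latter, and the rest depends
on the past only through the amount already picked.
-/

section

variable {M α : Type*} [AddCommMonoid M] [SemilatticeInf α]

/-- The egalitarian welfare of the non-interleaving picking sequence `k` of `d + 1` agents, started
after `t` has already been picked: the least utility of an agent, where `u a s` is the utility of
picking `a` after `s`. Amounts are elements of an arbitrary commutative monoid; with several types
of items they would be vectors. -/
def pickingWelfare (u : M → M → α) (t : M) {d : ℕ} (k : Fin (d + 1) → M) : α :=
  Finset.univ.inf' Finset.univ_nonempty fun i => u (k i) (t + ∑ j ∈ Finset.Iio i, k j)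

/-- The welfares of the picking sequences of `d + 1` agents that share out exactly `r` after `t` has
already been picked. -/
def attainableWelfare (u : M → M → α) (d : ℕ) (t r : M) : Set α :=
  {x | ∃ k : Fin (d + 1) → M, ∑ i, k i = r ∧ x = pickingWelfare u t k}

theorem sum_Iio_fin_zero {d : ℕ} (f : Fin (d + 1) → M) : ∑ j ∈ Finset.Iio 0, f j = 0 := by
  rw [← bot_eq_zero, Finset.Iio_bot, Finset.sum_empty]

theorem sum_Iio_fin_succ {d : ℕ} (f : Fin (d + 1) → M) (i : Fin d) :
    ∑ j ∈ Finset.Iio i.succ, f j = f 0 + ∑ j ∈ Finset.Iio i, f j.succ := by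
  simp only [← Finset.filter_gt_eq_Iio, Finset.sum_filter, Fin.sum_univ_succ, Fin.succ_pos,
    Fin.succ_lt_succ_iff, if_true]

theorem inf'_univ_fin_succ {d : ℕ} (f : Fin (d + 2) → α) :
    Finset.univ.inf' Finset.univ_nonempty f =
      f 0 ⊓ Finset.univ.inf' Finset.univ_nonempty fun i : Fin (d + 1) => f i.succ :=
  eq_of_forall_le_iff fun _ => by simp [Fin.forall_fin_succ (n := d + 1)]

theorem pickingWelfare_one (u : M → M → α) (t : M) (k : Fin 1 → M) :
    pickingWelfare u t k = u (k 0) t := by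
  simp [pickingWelfare, sum_Iio_fin_zero]

theorem pickingWelfare_cons (u : M → M → α) (t a : M) {d : ℕ} (k : Fin (d + 1) → M) :
    pickingWelfare u t (Fin.cons a k : Fin (d + 2) → M) = u a t ⊓ pickingWelfare u (t + a) k := by
  simp only [pickingWelfare, inf'_univ_fin_succ, sum_Iio_fin_zero, sum_Iio_fin_succ,
    Fin.cons_zero, Fin.cons_succ, add_zero, add_assoc]

theorem attainableWelfare_zero (u : M → M → α) (t r : M) : attainableWelfare u 0 t r = {u r t} := by
  ext x
  simp [attainableWelfare, pickingWelfare_one, Fin.exists_fin_succ_pi]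

theorem mem_attainableWelfare_succ {u : M → M → α} {d : ℕ} {t r : M} {x : α} :
    x ∈ attainableWelfare u (d + 1) t r ↔
      ∃ k s, k + s = r ∧ ∃ y ∈ attainableWelfare u d (t + k) s, x = u k t ⊓ y := by
  rw [attainableWelfare, Set.mem_ofPred_eq, Fin.exists_fin_succ_pi]
  simp only [Fin.sum_cons, pickingWelfare_cons]
  constructor
  · rintro ⟨k, v, hsum, hx⟩
    exact ⟨k, _, hsum, _, ⟨v, rfl, rfl⟩, hx⟩
  · rintro ⟨k, s, hsum, y, ⟨v, rfl, rfl⟩, hx⟩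
    exact ⟨k, v, hsum, hx⟩

-- `l + r = m` and `k + s = r` stand for `l ≤ m` and `k ≤ m - l`: `M` has no order or subtraction.
theorem dp_egalitarian_general {m : M} {u : M → M → α} {F : ℕ → M → α} {i d : ℕ}
    (hbase : ∀ l r, l + r = m → F (d + i) l = u r l)
    (hstep : ∀ j l r, i ≤ j → j < d + i → l + r = m →
      IsGreatest {x | ∃ k s, k + s = r ∧ x = u k l ⊓ F (j + 1) (l + k)} (F j l))
    {l r : M} (hlr : l + r = m) : IsGreatest (attainableWelfare u d l r) (F i l) := by
  induction d generalizing i l r with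
  | zero =>
    rw [zero_add] at hbase
    rw [attainableWelfare_zero, hbase l r hlr]
    exact isGreatest_singleton
  | succ d ih =>
    rw [add_assoc, add_comm 1] at hbase
    have hnext {k s : M} (hks : k + s = r) :
        IsGreatest (attainableWelfare u d (l + k) s) (F (i + 1) (l + k)) :=
      ih hbase (fun j l r hij hj => hstep j l r (by omega) (by omega))
        (by rw [add_assoc, hks, hlr])
    obtain ⟨⟨k, s, hks, hF⟩, hmax⟩ := hstep i l r le_rfl (by omega) hlr
    refine ⟨mem_attainableWelfare_succ.2 ⟨k, s, hks, _, (hnext hks).1, hF⟩, fun x hx => ?_⟩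
    obtain ⟨k, s, hks, y, hy, rfl⟩ := mem_attainableWelfare_succ.1 hx
    calc
      u k l ⊓ y ≤ u k l ⊓ F (i + 1) (l + k) := inf_le_inf_left _ ((hnext hks).2 hy)
      _ ≤ F i l := hmax ⟨k, s, hks, rfl⟩

end

/-- Dynamic programming for egalitarian social welfare.  Let `u k t` be any function (defined
for `k + t ≤ m`), and let `F` satisfy the base case `F n l = u (m - l) l` and, for
`1 ≤ i < n`, the recurrence making `F i l` the maximum over `k ∈ {0,…,m-l}` of
`min (u k l) (F (i+1) (l+k))`.  Then `F 1 0` is the maximum, over all vectors `(k_1,…,k_n)`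
of nonnegative integers summing to `m`, of `min_i u (k_i) (k_1 + ⋯ + k_{i-1})`. -/
theorem dp_egalitarian
    (n m : ℕ) (hn : 0 < n) (hm : 0 < m) (u : ℕ → ℕ → ℝ) (F : ℕ → ℕ → ℝ)
    (hbase : ∀ l ≤ m, F n l = u (m - l) l)
    (hstep : ∀ i l : ℕ, 1 ≤ i → i < n → l ≤ m →
      IsGreatest {x : ℝ | ∃ k ≤ m - l, x = min (u k l) (F (i + 1) (l + k))} (F i l)) :
    IsGreatest {x : ℝ | ∃ k : Fin n → ℕ, (∑ i, k i = m) ∧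
      x = Finset.univ.inf' (Finset.univ_nonempty_iff.mpr ⟨⟨0, hn⟩⟩)
        (fun i : Fin n => u (k i) (∑ j ∈ Finset.Iio i, k j))} (F 1 0) := by
  obtain ⟨d, rfl⟩ := Nat.exists_eq_add_one.2 hn
  have hbase' (l r : ℕ) (h : l + r = m) : F (d + 1) l = u r l := by
    rw [hbase l (by omega), ← h, Nat.add_sub_cancel_left]
  have hstep' (i l r : ℕ) (hi : 1 ≤ i) (hid : i < d + 1) (h : l + r = m) :
      IsGreatest {x | ∃ k s, k + s = r ∧ x = min (u k l) (F (i + 1) (l + k))} (F i l) := by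
    subst h
    simpa [le_iff_exists_add, eq_comm] using hstep i l hi hid (Nat.le_add_right l r)
  simpa [attainableWelfare, pickingWelfare] using dp_egalitarian_general hbase' hstep' (zero_add m)
end

section
/- Let n ≥ 2 and d ≥ 1 be integers, m = d·n, and s = (s_1,…,s_m) a scoring vector with all entries strictly positive. Then there exists a preference profile P for n agents over m items such that, for the non-interleaving picking sequence k = (d, d, …, d): ( (n-1)·Σ_{j=1}^{d} s_j + Σ_{j=d+1}^{2d} s_j ) / ( Σ_{j=1}^{m} s_j ) ≤ ( max_{π} SW^u_{P_π}(k) ) / ( min_{π} SW^u_{P_π}(k) ) ≤ ( n·Σ_{j=1}^{d} s_j ) / ( Σ_{j=1}^{m} s_j ), where π ranges over all permutations of the n agents and P_π is the profile obtained from P by permuting the agents' rankings according to π. -/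
/-- The `k` most preferred items of `S` under the ranking `σ` (where `σ r` is the item of
0-based rank `r`, so `σ.symm x` is the rank of item `x`): the items of `S` having fewer
than `k` strictly better items inside `S`. -/
def topk {m : ℕ} (σ : Fin m ≃ Fin m) (S : Finset (Fin m)) (k : ℕ) : Finset (Fin m) :=
  S.filter fun x => (S.filter fun y => σ.symm y < σ.symm x).card < k

/-- Items remaining before the `i`-th agent (0-based) picks, under profile `P` (agent `i`
has ranking `P i`) and pick-count vector `k` (agent `i` picks `k i` items). -/
def remaining {m : ℕ} (P : ℕ → Fin m ≃ Fin m) (k : ℕ → ℕ) : ℕ → Finset (Fin m)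
  | 0 => Finset.univ
  | i + 1 => remaining P k i \ topk (P i) (remaining P k i) (k i)

/-- The set of items greedily picked by the `i`-th agent (0-based). -/
def alloc {m : ℕ} (P : ℕ → Fin m ≃ Fin m) (k : ℕ → ℕ) (i : ℕ) : Finset (Fin m) :=
  topk (P i) (remaining P k i) (k i)

/-- The utility of the `i`-th agent (0-based): the sum of the scores `s r` over the
1-based ranks `r` (in her own ranking) of the items she receives. -/
noncomputable def util {m : ℕ} (s : ℕ → ℝ) (P : ℕ → Fin m ≃ Fin m) (k : ℕ → ℕ)
    (i : ℕ) : ℝ :=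
  ∑ x ∈ alloc P k i, s (((P i).symm x : ℕ) + 1)

/-- Permute the agents' rankings: agent at position `i` (0-based, `i < n`) gets the ranking
of agent `π i`. -/
def permProfile {m : ℕ} (n : ℕ) (P : ℕ → Fin m ≃ Fin m) (π : Equiv.Perm (Fin n)) :
    ℕ → Fin m ≃ Fin m :=
  fun i => if h : i < n then P ((π ⟨i, h⟩ : Fin n) : ℕ) else P i

/-- Utilitarian social welfare of the non-interleaving picking sequence `(d,…,d)` for `n`
agents. -/
noncomputable def SWu {m : ℕ} (n d : ℕ) (s : ℕ → ℝ) (P : ℕ → Fin m ≃ Fin m) : ℝ :=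
  ∑ i ∈ Finset.range n, util s P (fun _ => d) i

/-!
An agent picking `d` items after `e` items are gone gets, as her `j`-th best pick, an item whose
rank lies between `j` and `e + j`. Summing over the agents, the welfare of any profile is between
the sum of all scores and `n` times the sum of the top `d` scores, which settles the upper bound.

For the lower bound, cut the items into `n` blocks of `d` items and let every agent rank whole
blocks, arranged so that in both of the following orders the blocks are picked from left to right.
Agent `0` ranks block `0` first and the last block second; agent `a + 1` ranks block `a` first and
keeps block `a + 1` at its own place. In the order `0, 1, …, n - 1` each agent receives the block of
her own index, which sits at that very place of her ranking: the welfare is the sum of all scores,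
the least possible. In the order `1, …, n - 1, 0` everybody but agent `0` receives her favourite
block and agent `0` her second one.
-/

open Finset

section Sums

variable {M : Type*} [AddCommMonoid M]

lemma sum_Ioc_add_eq_sum_range (f : ℕ → M) (a k : ℕ) :
    ∑ j ∈ Ioc a (a + k), f j = ∑ j ∈ range k, f (a + j + 1) := by
  induction k with
  | zero => simp
  | succ k ih => rw [← add_assoc, sum_Ioc_succ_top (by omega), ih, sum_range_succ]

lemma sum_range_sum_Ioc (f : ℕ → M) {K : ℕ → ℕ} (hK : Monotone K) (n : ℕ) :
    ∑ i ∈ range n, ∑ j ∈ Ioc (K i) (K (i + 1)), f j = ∑ j ∈ Ioc (K 0) (K n), f j := by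
  induction n with
  | zero => simp
  | succ n ih =>
    rw [sum_range_succ, ih, sum_Ioc_consecutive _ (hK n.zero_le) (hK n.le_succ)]

end Sums

section Picking

variable {m : ℕ} (σ : Fin m ≃ Fin m) (S : Finset (Fin m)) (k : ℕ)

/-- The 0-based rank of `x` among the items of `S`, under the ranking `σ`. It is defined for any
item `x`, whether in `S` or not. -/
def rankIn (x : Fin m) : ℕ := #{y ∈ S | σ.symm y < σ.symm x}

variable {σ S k} in
lemma mem_topk {x : Fin m} : x ∈ topk σ S k ↔ x ∈ S ∧ rankIn σ S x < k :=
  mem_filter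

lemma topk_subset : topk σ S k ⊆ S :=
  filter_subset _ _

variable {S} in
lemma rankIn_lt_rankIn {x y : Fin m} (hx : x ∈ S) (hxy : σ.symm x < σ.symm y) :
    rankIn σ S x < rankIn σ S y := by
  refine card_lt_card ((ssubset_iff_of_subset ?_).2 ⟨x, by simp [hx, hxy], by simp⟩)
  exact monotone_filter_right S fun z _ hz => hz.trans hxy

lemma rankIn_injOn : Set.InjOn (rankIn σ S) S := by
  intro x hx y hy h
  rcases lt_trichotomy (σ.symm x) (σ.symm y) with hlt | heq | hgt
  · exact absurd h (rankIn_lt_rankIn σ hx hlt).ne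
  · exact σ.symm.injective heq
  · exact absurd h (rankIn_lt_rankIn σ hy hgt).ne'

lemma image_rankIn : S.image (rankIn σ S) = range #S := by
  refine eq_of_subset_of_card_le ?_ ?_
  · rw [image_subset_iff]
    exact fun x hx => mem_range.2 (card_lt_card (filter_ssubset.2 ⟨x, hx, lt_irrefl _⟩))
  · rw [card_range, card_image_of_injOn (rankIn_injOn σ S)]

lemma image_rankIn_topk : (topk σ S k).image (rankIn σ S) = range (min k #S) := by
  calc (topk σ S k).image (rankIn σ S)
    _ = {j ∈ S.image (rankIn σ S) | j < k} := (filter_image (p := (· < k))).symm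
    _ = range (min k #S) := by ext j; simp [image_rankIn, and_comm]

lemma sum_topk_rankIn {M : Type*} [AddCommMonoid M] (f : ℕ → M) :
    ∑ x ∈ topk σ S k, f (rankIn σ S x) = ∑ j ∈ range (min k #S), f j := by
  rw [← image_rankIn_topk, sum_image ((rankIn_injOn σ S).mono (topk_subset σ S k))]

lemma card_topk : #(topk σ S k) = min k #S := by
  simpa using sum_topk_rankIn σ S k fun _ => (1 : ℕ)

lemma rankIn_univ (x : Fin m) : rankIn σ univ x = σ.symm x := by
  have h : ({y | σ.symm y < σ.symm x} : Finset (Fin m)) =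
      (Iio (σ.symm x)).map σ.toEmbedding := by
    ext y
    simp [mem_map_equiv]
  rw [rankIn, h, card_map, Fin.card_Iio]

lemma rankIn_le_rank (x : Fin m) : rankIn σ S x ≤ σ.symm x := by
  rw [← rankIn_univ]
  exact card_le_card (filter_subset_filter _ (subset_univ S))

lemma rank_le_card_compl_add_rankIn (x : Fin m) : (σ.symm x : ℕ) ≤ #Sᶜ + rankIn σ S x := by
  rw [← rankIn_univ]
  refine (card_le_card fun y hy => ?_).trans (card_union_le _ _)
  by_cases hyS : y ∈ S <;> simp_all

variable {S} in
lemma topk_card_of_forall_lt {A : Finset (Fin m)} (hA : A ⊆ S)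
    (h : ∀ x ∈ A, ∀ y ∈ S, y ∉ A → σ.symm x < σ.symm y) : topk σ S #A = A := by
  refine (eq_of_subset_of_card_le (fun x hx => ?_) ?_).symm
  · refine mem_topk.2 ⟨hA hx, card_lt_card ((ssubset_iff_of_subset ?_).2 ⟨x, hx, by simp⟩)⟩
    intro y hy
    obtain ⟨hyS, hlt⟩ := mem_filter.1 hy
    by_contra hyA
    exact lt_asymm hlt (h x hx y hyS hyA)
  · rw [card_topk]
    exact min_le_left _ _

lemma card_remaining (P : ℕ → Fin m ≃ Fin m) (k : ℕ → ℕ) (i : ℕ) :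
    #(remaining P k i) = m - ∑ j ∈ range i, k j := by
  induction i with
  | zero => simp [remaining]
  | succ i ih =>
    rw [remaining, card_sdiff_of_subset (topk_subset _ _ _), card_topk, ih, sum_range_succ]
    omega

end Picking

section Bounds

variable {m n d : ℕ} {s : ℕ → ℝ} (P : ℕ → Fin m ≃ Fin m) {k : ℕ → ℕ} {i : ℕ}

lemma min_card_remaining (hk : ∑ j ∈ range (i + 1), k j ≤ m) :
    min (k i) #(remaining P k i) = k i := by
  rw [sum_range_succ] at hk
  rw [card_remaining]
  omega

lemma util_le (hs : AntitoneOn s (Set.Icc 1 m)) (hk : ∑ j ∈ range (i + 1), k j ≤ m) :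
    util s P k i ≤ ∑ j ∈ Ioc 0 (k i), s j :=
  calc util s P k i
    _ ≤ ∑ x ∈ alloc P k i, s (rankIn (P i) (remaining P k i) x + 1) := by
      refine sum_le_sum fun x _ => ?_
      have hrank := rankIn_le_rank (P i) (remaining P k i) x
      exact hs ⟨by omega, by omega⟩ ⟨by omega, by omega⟩ (by omega)
    _ = ∑ j ∈ range (k i), s (j + 1) := by
      rw [alloc, sum_topk_rankIn _ _ _ fun j => s (j + 1), min_card_remaining P hk]
    _ = ∑ j ∈ Ioc 0 (k i), s j := by
      simpa using (sum_Ioc_add_eq_sum_range s 0 (k i)).symm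

lemma sum_Ioc_le_util (hs : AntitoneOn s (Set.Icc 1 m)) (hk : ∑ j ∈ range (i + 1), k j ≤ m) :
    ∑ j ∈ Ioc (∑ j ∈ range i, k j) (∑ j ∈ range (i + 1), k j), s j ≤ util s P k i := by
  set e := ∑ j ∈ range i, k j
  have hsum : ∑ j ∈ range (i + 1), k j = e + k i := sum_range_succ k i
  have hcompl : #(remaining P k i)ᶜ = e := by
    rw [card_compl, Fintype.card_fin, card_remaining]
    omega
  calc ∑ j ∈ Ioc e (∑ j ∈ range (i + 1), k j), s j
    _ = ∑ j ∈ range (k i), s (e + j + 1) := by rw [hsum, sum_Ioc_add_eq_sum_range]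
    _ = ∑ x ∈ alloc P k i, s (e + rankIn (P i) (remaining P k i) x + 1) := by
      rw [alloc, sum_topk_rankIn _ _ _ fun j => s (e + j + 1), min_card_remaining P hk]
    _ ≤ util s P k i := by
      refine sum_le_sum fun x hx => ?_
      have hrank := rank_le_card_compl_add_rankIn (P i) (remaining P k i) x
      have hlt := (mem_topk.1 hx).2
      exact hs ⟨by omega, by omega⟩ ⟨by omega, by omega⟩ (by omega)

lemma sum_range_succ_le_of_lt (hk : ∑ j ∈ range n, k j ≤ m) (hi : i < n) :
    ∑ j ∈ range (i + 1), k j ≤ m :=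
  (sum_le_sum_of_subset (range_subset_range.2 hi)).trans hk

lemma sum_util_le (hs : AntitoneOn s (Set.Icc 1 m)) (hk : ∑ j ∈ range n, k j ≤ m) :
    ∑ i ∈ range n, util s P k i ≤ ∑ i ∈ range n, ∑ j ∈ Ioc 0 (k i), s j :=
  sum_le_sum fun _ hi => util_le P hs (sum_range_succ_le_of_lt hk (mem_range.1 hi))

lemma sum_Ioc_le_sum_util (hs : AntitoneOn s (Set.Icc 1 m)) (hk : ∑ j ∈ range n, k j ≤ m) :
    ∑ j ∈ Ioc 0 (∑ i ∈ range n, k i), s j ≤ ∑ i ∈ range n, util s P k i := by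
  have hmono : Monotone fun i => ∑ j ∈ range i, k j :=
    fun _ _ h => sum_le_sum_of_subset (range_subset_range.2 h)
  rw [← sum_range_zero k, ← sum_range_sum_Ioc s hmono]
  exact sum_le_sum fun _ hi => sum_Ioc_le_util P hs (sum_range_succ_le_of_lt hk (mem_range.1 hi))

lemma SWu_le (hs : AntitoneOn s (Set.Icc 1 m)) (hdn : d * n ≤ m) :
    SWu n d s P ≤ n * ∑ j ∈ Ioc 0 d, s j := by
  simpa [SWu] using sum_util_le P hs (k := fun _ => d) (n := n) (by simpa [mul_comm] using hdn)

lemma sum_Ioc_le_SWu (hs : AntitoneOn s (Set.Icc 1 m)) (hdn : d * n ≤ m) :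
    ∑ j ∈ Ioc 0 (d * n), s j ≤ SWu n d s P := by
  simpa [SWu, mul_comm] using
    sum_Ioc_le_sum_util P hs (k := fun _ => d) (n := n) (by simpa [mul_comm] using hdn)

end Bounds

section Owner

variable {m n i : ℕ} {P : ℕ → Fin m ≃ Fin m} {k : ℕ → ℕ} {o : Fin m → ℕ}

lemma topk_filter_le {σ : Fin m ≃ Fin m}
    (hσ : ∀ x y, o x = i → i < o y → σ.symm x < σ.symm y) :
    topk σ {x | i ≤ o x} #{x | o x = i} = ({x | o x = i} : Finset (Fin m)) := by
  refine topk_card_of_forall_lt σ (monotone_filter_right univ fun x _ (hx : o x = i) => hx.ge) ?_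
  simp only [mem_filter_univ]
  exact fun x hx y hy hne => hσ x y hx (lt_of_le_of_ne hy (Ne.symm hne))

lemma remaining_eq_filter (hcard : ∀ j < n, #{x | o x = j} = k j)
    (hP : ∀ j < n, ∀ x y, o x = j → j < o y → (P j).symm x < (P j).symm y) (hi : i ≤ n) :
    remaining P k i = ({x | i ≤ o x} : Finset (Fin m)) := by
  induction i with
  | zero => simp [remaining]
  | succ i ih =>
    rw [remaining, ih (by omega), ← hcard i hi, topk_filter_le (hP i hi)]
    ext x
    simp only [mem_sdiff, mem_filter_univ]
    omega

lemma alloc_eq_filter (hcard : ∀ j < n, #{x | o x = j} = k j)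
    (hP : ∀ j < n, ∀ x y, o x = j → j < o y → (P j).symm x < (P j).symm y) (hi : i < n) :
    alloc P k i = ({x | o x = i} : Finset (Fin m)) := by
  rw [alloc, remaining_eq_filter hcard hP hi.le, ← hcard i hi, topk_filter_le (hP i hi)]

end Owner

section Blocks

variable {n d : ℕ}

/-- The decomposition of `d * n` items into `n` consecutive blocks of `d` items: the pair `(b, r)`
stands for the `r`-th item of block `b`. -/
def blockEquiv (n d : ℕ) : Fin n × Fin d ≃ Fin (d * n) :=
  finProdFinEquiv.trans (finCongr (mul_comm n d))

lemma val_blockEquiv (p : Fin n × Fin d) : (blockEquiv n d p : ℕ) = d * p.1 + p.2 := by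
  simp [blockEquiv, finProdFinEquiv, add_comm]

lemma blockEquiv_lt_blockEquiv {p q : Fin n × Fin d} (h : p.1 < q.1) :
    blockEquiv n d p < blockEquiv n d q := by
  rw [Fin.lt_def, val_blockEquiv, val_blockEquiv]
  calc d * p.1 + p.2
    _ < d * (p.1 + 1) := by rw [mul_add_one]; exact Nat.add_lt_add_left p.2.isLt _
    _ ≤ d * q.1 := Nat.mul_le_mul_left d h
    _ ≤ d * q.1 + q.2 := Nat.le_add_right _ _

/-- The set of items of block `b`. -/
def block (d : ℕ) (b : Fin n) : Finset (Fin (d * n)) :=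
  univ.map ((Function.Embedding.sectR b (Fin d)).trans (blockEquiv n d).toEmbedding)

lemma filter_blockEquiv_symm_fst_eq (b : Fin n) :
    ({x | (((blockEquiv n d).symm x).1 : ℕ) = b} : Finset (Fin (d * n))) = block d b := by
  ext x
  obtain ⟨⟨c, r⟩, rfl⟩ := (blockEquiv n d).surjective x
  simp [block, Fin.ext_iff, eq_comm]

/-- The ranking in which block `b` comes at place `τ b`, each block being listed in increasing
order. -/
def blockRanking (d : ℕ) (τ : Equiv.Perm (Fin n)) : Fin (d * n) ≃ Fin (d * n) :=
  ((blockEquiv n d).permCongr (τ.prodCongr (Equiv.refl _))).symm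

lemma blockRanking_symm_apply (τ : Equiv.Perm (Fin n)) (x : Fin (d * n)) :
    (blockRanking d τ).symm x =
      blockEquiv n d (τ ((blockEquiv n d).symm x).1, ((blockEquiv n d).symm x).2) :=
  rfl

variable {P : ℕ → Fin (d * n) ≃ Fin (d * n)} {τ : Fin n → Equiv.Perm (Fin n)}

lemma alloc_blockRanking (hP : ∀ i : Fin n, P i = blockRanking d (τ i))
    (hτ : ∀ b c, b < c → τ b b < τ b c) (i : Fin n) : alloc P (fun _ => d) i = block d i := by
  rw [← filter_blockEquiv_symm_fst_eq]
  refine alloc_eq_filter (n := n) (fun j hj => ?_) (fun j hj x y hx hy => ?_) i.isLt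
  · rw [filter_blockEquiv_symm_fst_eq ⟨j, hj⟩]
    simp [block]
  · lift j to Fin n using hj
    rw [hP, blockRanking_symm_apply, blockRanking_symm_apply, Fin.ext hx]
    exact blockEquiv_lt_blockEquiv (hτ j _ hy)

lemma SWu_blockRanking (s : ℕ → ℝ) (hP : ∀ i : Fin n, P i = blockRanking d (τ i))
    (hτ : ∀ b c, b < c → τ b b < τ b c) :
    SWu n d s P = ∑ i, ∑ j ∈ Ioc (d * (τ i i : ℕ)) (d * (τ i i + 1)), s j := by
  rw [SWu, sum_range]
  refine sum_congr rfl fun i _ => ?_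
  rw [util, alloc_blockRanking hP hτ, block, sum_map, mul_add_one, sum_Ioc_add_eq_sum_range,
    sum_range]
  simp [hP, blockRanking_symm_apply, val_blockEquiv]

end Blocks

section Profile

variable {N : ℕ}

/-- `blockPlace a b` is the place of block `b` in the ranking of agent `a`. -/
def blockPlace : Fin (N + 2) → Equiv.Perm (Fin (N + 2)) :=
  Fin.cases (Equiv.swap 1 (Fin.last (N + 1))) fun a => Equiv.swap 0 a.castSucc

lemma blockPlace_zero : blockPlace (0 : Fin (N + 2)) = Equiv.swap 1 (Fin.last (N + 1)) :=
  rfl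

lemma blockPlace_succ (a : Fin (N + 1)) : blockPlace a.succ = Equiv.swap 0 a.castSucc :=
  rfl

lemma apply_lt_apply_of_apply_eq_zero {τ : Equiv.Perm (Fin (N + 1))} {b c : Fin (N + 1)}
    (hb : τ b = 0) (hbc : b ≠ c) : τ b < τ c := by
  rw [hb, Fin.pos_iff_ne_zero, ← hb]
  exact τ.injective.ne hbc.symm

lemma blockPlace_self (a : Fin (N + 2)) : blockPlace a a = a := by
  cases a using Fin.cases with
  | zero => exact Equiv.swap_apply_of_ne_of_ne (by simp) (by simp [Fin.ext_iff])
  | succ a => exact Equiv.swap_apply_of_ne_of_ne a.succ_ne_zero a.castSucc_lt_succ.ne'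

lemma blockPlace_self_lt {a c : Fin (N + 2)} (h : a < c) : blockPlace a a < blockPlace a c := by
  cases a using Fin.cases with
  | zero => exact apply_lt_apply_of_apply_eq_zero (blockPlace_self 0) h.ne
  | succ a =>
    have hc : blockPlace a.succ c = c :=
      Equiv.swap_apply_of_ne_of_ne (Fin.ne_zero_of_lt h) (a.castSucc_lt_succ.trans h).ne'
    rwa [blockPlace_self, hc]

lemma blockPlace_finRotate_castSucc (b : Fin (N + 1)) :
    blockPlace (finRotate (N + 2) b.castSucc) b.castSucc = 0 := by
  rw [finRotate_apply, Fin.coeSucc_eq_succ, blockPlace_succ, Equiv.swap_apply_right]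

lemma blockPlace_finRotate_last :
    blockPlace (finRotate (N + 2) (Fin.last (N + 1))) (Fin.last (N + 1)) = 1 := by
  rw [finRotate_last, blockPlace_zero, Equiv.swap_apply_right]

lemma blockPlace_finRotate_lt {b c : Fin (N + 2)} (h : b < c) :
    blockPlace (finRotate (N + 2) b) b < blockPlace (finRotate (N + 2) b) c := by
  obtain ⟨b, rfl⟩ := Fin.exists_castSucc_eq.2 (Fin.ne_last_of_lt h)
  exact apply_lt_apply_of_apply_eq_zero (blockPlace_finRotate_castSucc b) h.ne

/-- The profile attaining the price: agent `a < N + 2` places the blocks according to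
`blockPlace a`; the rankings of larger indices are never used. -/
def blockProfile (N d a : ℕ) : Fin (d * (N + 2)) ≃ Fin (d * (N + 2)) :=
  blockRanking d (blockPlace (Fin.ofNat (N + 2) a))

lemma permProfile_blockProfile (d : ℕ) (π : Equiv.Perm (Fin (N + 2))) (i : Fin (N + 2)) :
    permProfile (N + 2) (blockProfile N d) π i = blockRanking d (blockPlace (π i)) := by
  simp [permProfile, blockProfile]

lemma SWu_blockProfile_one (N d : ℕ) (s : ℕ → ℝ) :
    SWu (N + 2) d s (permProfile (N + 2) (blockProfile N d) 1) =
      ∑ j ∈ Ioc 0 (d * (N + 2)), s j := by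
  rw [SWu_blockRanking s (permProfile_blockProfile d 1) fun _ _ => blockPlace_self_lt]
  have htelescope := sum_range_sum_Ioc s (mul_right_mono (a := d)) (N + 2)
  simpa [blockPlace_self, sum_range] using htelescope

lemma SWu_blockProfile_finRotate (N d : ℕ) (s : ℕ → ℝ) :
    SWu (N + 2) d s (permProfile (N + 2) (blockProfile N d) (finRotate (N + 2))) =
      (N + 1) * ∑ j ∈ Ioc 0 d, s j + ∑ j ∈ Ioc d (2 * d), s j := by
  rw [SWu_blockRanking s (permProfile_blockProfile d (finRotate (N + 2)))
    fun _ _ => blockPlace_finRotate_lt, Fin.sum_univ_castSucc]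
  simp only [blockPlace_finRotate_castSucc, blockPlace_finRotate_last]
  simp [mul_comm d, one_add_one_eq_two]

end Profile

theorem price_of_assignment_utilitarian_general (n d : ℕ) (hn : 2 ≤ n) :
    ∃ P : ℕ → Fin (d * n) ≃ Fin (d * n), ∀ s : ℕ → ℝ, AntitoneOn s (Set.Icc 1 (d * n)) →
      0 < ∑ j ∈ Icc 1 (d * n), s j →
      (((n : ℝ) - 1) * (∑ j ∈ Icc 1 d, s j) + ∑ j ∈ Icc (d + 1) (2 * d), s j) /
          (∑ j ∈ Icc 1 (d * n), s j) ≤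
        (univ.sup' univ_nonempty fun π => SWu n d s (permProfile n P π)) /
          (univ.inf' univ_nonempty fun π => SWu n d s (permProfile n P π)) ∧
      (univ.sup' univ_nonempty fun π => SWu n d s (permProfile n P π)) /
          (univ.inf' univ_nonempty fun π => SWu n d s (permProfile n P π)) ≤
        (n : ℝ) * (∑ j ∈ Icc 1 d, s j) / (∑ j ∈ Icc 1 (d * n), s j) := by
  obtain ⟨N, rfl⟩ := Nat.exists_eq_add_of_le' hn
  refine ⟨blockProfile N d, fun s hs htotal => ?_⟩
  have hIcc (k : ℕ) : Icc 1 k = Ioc 0 k := Icc_add_one_left_eq_Ioc 0 k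
  simp only [hIcc, Icc_add_one_left_eq_Ioc] at htotal ⊢
  have hmin : univ.inf' univ_nonempty (fun π =>
      SWu (N + 2) d s (permProfile (N + 2) (blockProfile N d) π)) =
      ∑ j ∈ Ioc 0 (d * (N + 2)), s j := by
    apply le_antisymm
    · exact (inf'_le _ (mem_univ 1)).trans_eq (SWu_blockProfile_one N d s)
    · exact le_inf' _ _ fun π _ => sum_Ioc_le_SWu _ hs le_rfl
  rw [hmin]
  constructor <;> refine div_le_div_of_nonneg_right ?_ htotal.le
  · refine le_sup'_of_le _ (mem_univ (finRotate (N + 2))) (le_of_eq ?_)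
    have hagents : ((N + 2 : ℕ) : ℝ) - 1 = N + 1 := by push_cast; ring
    rw [SWu_blockProfile_finRotate, hagents]
  · exact sup'_le _ _ fun π _ => SWu_le _ hs le_rfl

/-- Price of the assignment of agents to positions, utilitarian case.  For `n ≥ 2` agents,
`m = d·n` items and a strictly positive scoring vector `s`, there is a preference profile
`P` such that for the non-interleaving picking sequence `k = (d,…,d)`:
`((n-1)·Σ_{j=1}^{d} s_j + Σ_{j=d+1}^{2d} s_j) / Σ_{j=1}^{m} s_j
  ≤ max_π SW^u_{P_π}(k) / min_π SW^u_{P_π}(k) ≤ (n·Σ_{j=1}^{d} s_j) / Σ_{j=1}^{m} s_j`. -/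
theorem price_of_assignment_utilitarian
    (n d : ℕ) (hn : 2 ≤ n) (hd : 1 ≤ d) (s : ℕ → ℝ)
    (hmono : ∀ i j : ℕ, 1 ≤ i → i ≤ j → j ≤ d * n → s j ≤ s i)
    (hpos : ∀ j : ℕ, 1 ≤ j → j ≤ d * n → 0 < s j) :
    ∃ P : ℕ → Fin (d * n) ≃ Fin (d * n),
      (((n : ℝ) - 1) * (∑ j ∈ Finset.Icc 1 d, s j) +
            ∑ j ∈ Finset.Icc (d + 1) (2 * d), s j) /
          (∑ j ∈ Finset.Icc 1 (d * n), s j) ≤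
        (Finset.univ.sup' Finset.univ_nonempty
            (fun π : Equiv.Perm (Fin n) => SWu n d s (permProfile n P π))) /
          (Finset.univ.inf' Finset.univ_nonempty
            (fun π : Equiv.Perm (Fin n) => SWu n d s (permProfile n P π))) ∧
      (Finset.univ.sup' Finset.univ_nonempty
            (fun π : Equiv.Perm (Fin n) => SWu n d s (permProfile n P π))) /
          (Finset.univ.inf' Finset.univ_nonempty
            (fun π : Equiv.Perm (Fin n) => SWu n d s (permProfile n P π))) ≤
        (n : ℝ) * (∑ j ∈ Finset.Icc 1 d, s j) / (∑ j ∈ Finset.Icc 1 (d * n), s j) := by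
  obtain ⟨P, hP⟩ := price_of_assignment_utilitarian_general n d hn
  have hs : AntitoneOn s (Set.Icc 1 (d * n)) := fun i hi j hj hij => hmono i j hi.1 hij hj.2
  have hm : 1 ≤ d * n := Nat.mul_pos hd (by omega)
  exact ⟨P, hP s hs <| sum_pos (fun j hj => hpos j (mem_Icc.1 hj).1 (mem_Icc.1 hj).2)
    (nonempty_Icc.2 hm)⟩
end
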